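/- Let n > n₁ > n₂ be nonnegative integers. Set λ₁ := α/β and λ₂ := (C_α/C_β) · [((1 − α^{n₁−n})(1 − γ^{n₂−n}) − (1 − α^{n₂−n})(1 − γ^{n₁−n})) / ((1 − β^{n₁−n})(1 − γ^{n₂−n}) − (1 − β^{n₂−n})(1 − γ^{n₁−n}))], and assume the denominator of this fraction is nonzero. If λ₁ and λ₂ are multiplicatively dependent, i.e. there exist integers A, B, not both zero, with λ₁^A = λ₂^B, then there is an integer t with |t| < 80n + 244 such that λ₂ = z^t or λ₂ = −z^t, where z is the unique element of K = ℚ(α, β) with z³ = α/β. -/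

import Mathlib

/-- The quantity `λ₂` from Lemma on multiplicative dependence:
`(C_α/C_β) · [((1−α^{n₁−n})(1−γ^{n₂−n}) − (1−α^{n₂−n})(1−γ^{n₁−n})) /
((1−β^{n₁−n})(1−γ^{n₂−n}) − (1−β^{n₂−n})(1−γ^{n₁−n}))]`,
where `C_w = (w−1)/(4w−6)`. -/
noncomputable def lam2 (α β γ : ℂ) (n n₁ n₂ : ℕ) : ℂ :=
  ((α - 1) / (4 * α - 6)) / ((β - 1) / (4 * β - 6)) *
    (((1 - α ^ ((n₁ : ℤ) - (n : ℤ))) * (1 - γ ^ ((n₂ : ℤ) - (n : ℤ))) -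
        (1 - α ^ ((n₂ : ℤ) - (n : ℤ))) * (1 - γ ^ ((n₁ : ℤ) - (n : ℤ)))) /
      ((1 - β ^ ((n₁ : ℤ) - (n : ℤ))) * (1 - γ ^ ((n₂ : ℤ) - (n : ℤ))) -
        (1 - β ^ ((n₂ : ℤ) - (n : ℤ))) * (1 - γ ^ ((n₁ : ℤ) - (n : ℤ)))))

/-!
If `λ₁ ^ A = λ₂ ^ B`, then `|λ₂|²` is an element of `ℚ(α)` some power of which is a power of `α`.
Since `α` is not a proper power in `ℚ(α)`, this forces `|λ₂|² = α ^ t`, so that `λ₂ / z ^ t` is a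
root of unity of `K = ℚ(α, β)`. If `ζ` is a root of unity of `K`, then `ζ + ζ⁻¹` is an integer and
`ζ - ζ⁻¹` times the square root of the discriminant `-44` lies in `ℚ(α)`; its square is rational,
hence a rational square because `ℚ(α)` has odd degree, and this leaves only `ζ = ±1`.

To bound `t`, write `λ₂` as a constant times a quotient `u / v` of determinants that are symmetric
in the roots they involve. Then `v` is an algebraic integer of `ℚ(α)`, and its other two
conjugates are `u` and `conj u`, so `|v| * |u|² ≥ 1`; with upper bounds for
`|u|` and `|v|` this keeps `u / v` away from `0` and `∞`.
-/

universe u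

open Cardinal Polynomial IntermediateField ComplexConjugate

theorem nonempty_algHom_of_isTranscendenceBasis {R K L ι : Type*} [CommRing R] [IsDomain R]
    [Field K] [Field L] [IsAlgClosed L] [Algebra R K] [Algebra R L] {v : ι → K} {w : ι → L}
    (hv : IsTranscendenceBasis R v) (hw : AlgebraicIndependent R w) : Nonempty (K →ₐ[R] L) := by
  let f : Algebra.adjoin R (Set.range v) →ₐ[R] L :=
    (MvPolynomial.aeval w).comp (hv.1.aevalEquiv.symm : _ →ₐ[R] _)
  have hf : Function.Injective f :=
    (algebraicIndependent_iff_injective_aeval.1 hw).comp hv.1.aevalEquiv.symm.injective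
  let := f.toRingHom.toAlgebra
  have : IsScalarTower R (Algebra.adjoin R (Set.range v)) L :=
    .of_algebraMap_eq' f.comp_algebraMap.symm
  have : FaithfulSMul (Algebra.adjoin R (Set.range v)) L :=
    (faithfulSMul_iff_algebraMap_injective _ _).2 hf
  have := hv.isAlgebraic
  exact ⟨(IsAlgClosed.lift (R := Algebra.adjoin R (Set.range v))).restrictScalars R⟩

theorem exists_ringHom_comp_eq {k L M : Type u} [Field k] [Countable k] [Field L] [Field M]
    [IsAlgClosed L] [IsAlgClosed M] (hL : ℵ₀ < #L) (hLM : #L = #M) (i : k →+* L) (j : k →+* M) :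
    ∃ σ : L →+* M, σ.comp i = j := by
  let := i.toAlgebra
  let := j.toAlgebra
  obtain ⟨s, hs⟩ := exists_isTranscendenceBasis k L
  obtain ⟨t, ht⟩ := exists_isTranscendenceBasis k M
  have hLs := IsAlgClosed.cardinal_eq_cardinal_transcendence_basis_of_aleph0_lt' _ hs mk_le_aleph0
    hL
  have hMt := IsAlgClosed.cardinal_eq_cardinal_transcendence_basis_of_aleph0_lt' _ ht mk_le_aleph0
    (hLM ▸ hL)
  obtain ⟨e⟩ := Cardinal.eq.1 (hLs.symm.trans (hLM.trans hMt))
  obtain ⟨σ⟩ := nonempty_algHom_of_isTranscendenceBasis hs (ht.1.comp e e.injective)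
  exact ⟨σ, σ.comp_algebraMap⟩

theorem exists_algHom_apply_eq_of_aeval_minpoly {F E : Type*} [Field F] [Countable F]
    [Field E] [IsAlgClosed E] [Algebra F E] (hE : ℵ₀ < #E) {x y : E} (hx : IsIntegral F x)
    (hy : aeval y (minpoly F x) = 0) : ∃ σ : E →ₐ[F] E, σ x = y := by
  let pb := adjoin.powerBasis hx
  have : Module.Finite F F⟮x⟯ := pb.finite
  have : Countable F⟮x⟯ := by
    rw [← mk_le_aleph0_iff]
    simpa using Algebra.IsAlgebraic.lift_cardinalMk_le_max F F⟮x⟯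
  have hy' : aeval y (minpoly F pb.gen) = 0 := by
    rwa [adjoin.powerBasis_gen, minpoly_gen]
  obtain ⟨σ, hσ⟩ := exists_ringHom_comp_eq hE rfl (algebraMap F⟮x⟯ E) (pb.lift y hy')
  refine ⟨⟨σ, fun r ↦ ?_⟩, ?_⟩
  · exact (RingHom.congr_fun hσ (algebraMap F _ r)).trans ((pb.lift y hy').commutes r)
  · calc σ x = σ (algebraMap F⟮x⟯ E pb.gen) := by simp [pb]
      _ = pb.lift y hy' pb.gen := RingHom.congr_fun hσ pb.gen
      _ = y := pb.lift_gen y hy'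

theorem mem_bot_of_algHom_apply_eq {K L M : Type*} [Field K] [Field L] [Field M]
    [Algebra K L] [Algebra K M] (hp : (Module.finrank K L).Prime) {σ τ : L →ₐ[K] M}
    (hne : σ ≠ τ) {x : L} (hx : σ x = τ x) : x ∈ (⊥ : Subalgebra K L) := by
  have := Subalgebra.isSimpleOrder_of_finrank_prime K L hp
  rcases eq_bot_or_eq_top (AlgHom.equalizer σ τ) with h | h
  · rw [← h]; exact hx
  · exact absurd (AlgHom.equalizer_eq_top.1 h) hne

theorem isSquare_of_isSquare_algebraMap {K L : Type*} [Field K] [Field L] [Algebra K L]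
    (hodd : Odd (Module.finrank K L)) {d : K} (hd : IsSquare (algebraMap K L d)) : IsSquare d := by
  obtain ⟨x, hx⟩ := hd
  by_contra hns
  have hirr : Irreducible (X ^ 2 - C d) :=
    (X_pow_sub_C_irreducible_iff_of_prime Nat.prime_two).2 fun b hb ↦ hns ⟨b, by rw [← hb, sq]⟩
  have hmonic : (X ^ 2 - C d).Monic := monic_X_pow_sub_C d two_ne_zero
  have hroot : aeval x (X ^ 2 - C d) = 0 := by simp [hx, sq]
  have hdvd := minpoly.degree_dvd (K := K) ⟨_, hmonic, hroot⟩
  rw [← minpoly.eq_of_irreducible_of_monic hirr hroot hmonic, natDegree_X_pow_sub_C] at hdvd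
  exact Nat.not_even_iff_odd.2 hodd (even_iff_two_dvd.2 hdvd)

theorem eq_zpow_of_pow_eq_zpow {k : Type*} [Field k] [LinearOrder k] [IsStrictOrderedRing k]
    {a u : k} (ha : 0 < a) (hroot : ∀ v : k, 0 < v → ∀ m : ℕ, v ^ m = a → m = 1) (hu : 0 < u)
    {B : ℕ} (hB : B ≠ 0) {E : ℤ} (h : u ^ B = a ^ E) : ∃ t : ℤ, u = a ^ t := by
  have hd : 0 < Int.gcd E B := Int.gcd_pos_of_ne_zero_right _ (mod_cast hB)
  obtain ⟨e, m, hem, hE, hBm⟩ := Int.exists_gcd_one hd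
  generalize Int.gcd E B = d at hd hE hBm
  have hmd : 0 ≤ m * d := hBm ▸ B.cast_nonneg
  lift m to ℕ using nonneg_of_mul_nonneg_left hmd (mod_cast hd)
  have hum : u ^ m = a ^ e := by
    rw [← pow_left_inj₀ (by positivity) (by positivity) hd.ne', ← pow_mul, ← zpow_natCast (a ^ e),
      ← zpow_mul, ← hE, ← h]
    congr 1
    exact_mod_cast hBm.symm
  obtain ⟨r, s, hrs⟩ := Int.isCoprime_iff_gcd_eq_one.2 hem
  have hv : (u ^ r * a ^ s) ^ m = a := by
    calc (u ^ r * a ^ s) ^ m = (u ^ m) ^ r * (a ^ s) ^ m := by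
          rw [mul_pow, ← zpow_natCast, ← zpow_mul, mul_comm r, zpow_mul, zpow_natCast]
      _ = a ^ (r * e + s * m) := by
          rw [hum, ← zpow_mul, ← zpow_natCast, ← zpow_mul, ← zpow_add₀ ha.ne', mul_comm e]
      _ = a := by rw [hrs, zpow_one]
  obtain rfl := hroot _ (by positivity) m hv
  exact ⟨e, by simpa using hum⟩

section

variable {k : Type*} [Field k] [LinearOrder k] [IsStrictOrderedRing k] {a c u v : k} {t e : ℤ}

theorem le_of_mul_div_eq_zpow (ha : 1 < a) (hv : 0 < v) (huv : 1 ≤ v * u ^ 2) (hc : c ≤ a ^ 2)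
    (hu : 0 < u) (hue : u ≤ a ^ e) (ht : c * (u / v) = a ^ t) : t ≤ 3 * e + 2 := by
  have ha0 : 0 < a := one_pos.trans ha
  refine (zpow_le_zpow_iff_right₀ ha).1 ?_
  calc a ^ t = c * (u / v) := ht.symm
    _ ≤ a ^ 2 * u ^ 3 := by
      gcongr
      rw [div_le_iff₀ hv]
      linarith [mul_le_mul_of_nonneg_left huv hu.le]
    _ ≤ a ^ 2 * (a ^ e) ^ 3 := by gcongr
    _ = a ^ (3 * e + 2) := by
      rw [zpow_add₀ ha0.ne', mul_comm 3 e, zpow_mul, zpow_ofNat, zpow_ofNat, mul_comm]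

theorem neg_le_of_mul_div_eq_zpow (ha : 1 < a) (hv : 0 < v) (huv : 1 ≤ v * u ^ 2) (hc : 1 ≤ c)
    (hu : 0 < u) (hve : v ≤ a ^ e) (ht : c * (u / v) = a ^ t) : -(2 * t) ≤ 3 * e := by
  refine (zpow_le_zpow_iff_right₀ ha).1 ?_
  calc a ^ (-(2 * t)) = (c * (u / v))⁻¹ ^ 2 := by
        rw [ht, mul_comm, ← neg_mul, zpow_mul, zpow_neg, zpow_ofNat]
    _ ≤ (u / v)⁻¹ ^ 2 := by
      gcongr
      exact le_mul_of_one_le_left (by positivity) hc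
    _ ≤ v ^ 3 := by
      rw [inv_div, div_pow, div_le_iff₀ (by positivity)]
      linarith [mul_le_mul_of_nonneg_left huv (sq_nonneg v)]
    _ ≤ (a ^ e) ^ 3 := by gcongr
    _ = a ^ (3 * e) := by rw [mul_comm 3 e, zpow_mul, zpow_ofNat]

end

theorem aeval_tribonacci {R A : Type*} [CommRing R] [CommRing A] [Algebra R A] {x : A}
    (hx : x ^ 3 = x ^ 2 + x + 1) : aeval x (X ^ 3 - X ^ 2 - X - 1 : R[X]) = 0 := by
  simp only [map_sub, map_pow, aeval_X, map_one, hx]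
  ring

theorem isIntegral_of_tribonacci {R : Type*} [CommRing R] {x : R} (hx : x ^ 3 = x ^ 2 + x + 1) :
    IsIntegral ℤ x :=
  ⟨X ^ 3 - X ^ 2 - X - 1, by monicity!, aeval_tribonacci hx⟩

theorem isIntegral_zpow_of_tribonacci {K : Type*} [Field K] {x : K} (hx : x ^ 3 = x ^ 2 + x + 1)
    (k : ℤ) : IsIntegral ℤ (x ^ k) := by
  have hint := isIntegral_of_tribonacci hx
  have hinv : x⁻¹ = x ^ 2 - x - 1 := inv_eq_of_mul_eq_one_right (by linear_combination hx)
  obtain ⟨m, rfl | rfl⟩ := k.eq_nat_or_neg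
  · simpa using hint.pow m
  · rw [zpow_neg, zpow_natCast, ← inv_pow, hinv]
    exact (((hint.pow 2).sub hint).sub isIntegral_one).pow m

theorem irreducible_tribonacci : Irreducible (X ^ 3 - X ^ 2 - X - 1 : ℚ[X]) := by
  have hdeg : (X ^ 3 - X ^ 2 - X - 1 : ℚ[X]).natDegree = 3 := by compute_degree!
  refine irreducible_of_degree_le_three_of_not_isRoot (by simp [hdeg]) fun r hr ↦ ?_
  have hr' : r ^ 3 = r ^ 2 + r + 1 := by
    simp only [IsRoot.def, eval_sub, eval_pow, eval_X, eval_one] at hr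
    linear_combination hr
  obtain ⟨k, rfl⟩ := IsIntegrallyClosed.isIntegral_iff.1 (isIntegral_of_tribonacci hr')
  have hk : k * (k ^ 2 - k - 1) = 1 := by
    rw [eq_intCast] at hr'
    have hk3 : k ^ 3 = k ^ 2 + k + 1 := mod_cast hr'
    linear_combination hk3
  rcases Int.isUnit_iff.1 (IsUnit.of_mul_eq_one _ hk) with rfl | rfl <;> norm_num at hk

/-- The determinant with rows `(1 - x ^ k, 1 - x ^ l)` and `(1 - y ^ k, 1 - y ^ l)`, multiplied by
`y - x` to make it symmetric in `x` and `y`. The fraction in `λ₂` is a quotient of two such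
determinants. -/
def symmDet {K : Type*} [Field K] (x y : K) (k l : ℤ) : K :=
  (y - x) * ((1 - x ^ k) * (1 - y ^ l) - (1 - x ^ l) * (1 - y ^ k))

theorem symmDet_comm {K : Type*} [Field K] (x y : K) (k l : ℤ) :
    symmDet x y k l = symmDet y x k l := by
  unfold symmDet
  ring

theorem map_symmDet {F K L : Type*} [Field K] [Field L] [FunLike F K L] [RingHomClass F K L]
    (f : F) (x y : K) (k l : ℤ) : f (symmDet x y k l) = symmDet (f x) (f y) k l := by
  simp only [symmDet, map_mul, map_sub, map_one, map_zpow₀]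

theorem symmDet_mem {F K : Type*} [Field F] [Field K] [Algebra F K] (S : IntermediateField F K)
    {x y : K} (hx : x ∈ S) (hy : y ∈ S) (k l : ℤ) : symmDet x y k l ∈ S := by
  have one_sub_zpow_mem {w : K} (hw : w ∈ S) (m : ℤ) : 1 - w ^ m ∈ S :=
    sub_mem (one_mem S) (zpow_mem hw m)
  exact mul_mem (sub_mem hy hx) (sub_mem
    (mul_mem (one_sub_zpow_mem hx k) (one_sub_zpow_mem hy l))
    (mul_mem (one_sub_zpow_mem hx l) (one_sub_zpow_mem hy k)))

theorem isIntegral_symmDet {K : Type*} [Field K] {x y : K} (hx : x ^ 3 = x ^ 2 + x + 1)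
    (hy : y ^ 3 = y ^ 2 + y + 1) (k l : ℤ) : IsIntegral ℤ (symmDet x y k l) := by
  have isIntegral_one_sub_zpow {w : K} (hw : w ^ 3 = w ^ 2 + w + 1) (m : ℤ) :
      IsIntegral ℤ (1 - w ^ m) :=
    isIntegral_one.sub (isIntegral_zpow_of_tribonacci hw m)
  exact ((isIntegral_of_tribonacci hy).sub (isIntegral_of_tribonacci hx)).mul
    (((isIntegral_one_sub_zpow hx k).mul (isIntegral_one_sub_zpow hy l)).sub
      ((isIntegral_one_sub_zpow hx l).mul (isIntegral_one_sub_zpow hy k)))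

theorem lam2_eq {α β γ : ℂ} (hα : γ ≠ α) (hβ : γ ≠ β) (n n₁ n₂ : ℕ) :
    lam2 α β γ n n₁ n₂ = (α - 1) / (4 * α - 6) / ((β - 1) / (4 * β - 6)) *
      ((γ - β) / (γ - α)) * (symmDet α γ (n₁ - n) (n₂ - n) / symmDet β γ (n₁ - n) (n₂ - n)) := by
  rw [lam2, symmDet, symmDet, mul_div_mul_comm, mul_assoc _ ((γ - β) / _),
    ← mul_assoc ((γ - β) / _), div_mul_div_cancel₀ (sub_ne_zero.2 hα),
    div_self (sub_ne_zero.2 hβ), one_mul]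

theorem normSq_sub_le_two_mul (x y : ℂ) :
    Complex.normSq (x - y) ≤ 2 * (Complex.normSq x + Complex.normSq y) := by
  have hadd := Complex.normSq_nonneg (x + y)
  rw [Complex.normSq_add] at hadd
  rw [Complex.normSq_sub]
  linarith

theorem normSq_symmDet_le {x y : ℂ} {k l : ℤ} {d r s : ℝ} (hd : Complex.normSq (y - x) ≤ d)
    (hxk : Complex.normSq (1 - x ^ k) ≤ r) (hxl : Complex.normSq (1 - x ^ l) ≤ r)
    (hyk : Complex.normSq (1 - y ^ k) ≤ s) (hyl : Complex.normSq (1 - y ^ l) ≤ s) :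
    Complex.normSq (symmDet x y k l) ≤ d * (2 * (r * s + r * s)) := by
  have hr := (Complex.normSq_nonneg _).trans hxk
  rw [symmDet, map_mul]
  refine mul_le_mul hd ((normSq_sub_le_two_mul _ _).trans ?_) (Complex.normSq_nonneg _)
    ((Complex.normSq_nonneg _).trans hd)
  simp only [map_mul]
  gcongr <;> exact Complex.normSq_nonneg _

/-- `α` is the real root and `β` a non-real root of `X ^ 3 - X ^ 2 - X - 1`, so that the third
root is `conj β`. -/
structure TribonacciPair (α : ℝ) (β : ℂ) : Prop where
  real_root : α ^ 3 = α ^ 2 + α + 1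
  complex_root : β ^ 3 = β ^ 2 + β + 1
  im_ne_zero : β.im ≠ 0

namespace TribonacciPair

variable {α : ℝ} {β : ℂ}

theorem lt_root (h : TribonacciPair α β) : 1.83 < α := by
  nlinarith [h.real_root, sq_nonneg (α + 0.415)]

theorem root_lt (h : TribonacciPair α β) : α < 1.84 := by
  nlinarith [h.real_root, sq_nonneg (α + 0.42)]

theorem pos (h : TribonacciPair α β) : 0 < α := by linarith [h.lt_root]

theorem one_lt (h : TribonacciPair α β) : 1 < α := by linarith [h.lt_root]

protected theorem conjugate (h : TribonacciPair α β) : TribonacciPair α (conj β) where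
  real_root := h.real_root
  complex_root := by simpa using congrArg conj h.complex_root
  im_ne_zero := by simpa using h.im_ne_zero

theorem ne_ofReal (h : TribonacciPair α β) (x : ℝ) : β ≠ x := by
  rintro rfl
  exact h.im_ne_zero (Complex.ofReal_im x)

theorem ne_zero (h : TribonacciPair α β) : β ≠ 0 := mod_cast h.ne_ofReal 0

theorem ne_conj (h : TribonacciPair α β) : β ≠ conj β :=
  fun e ↦ h.im_ne_zero (Complex.conj_eq_iff_im.1 e.symm)

theorem quadratic (h : TribonacciPair α β) : β ^ 2 + (α - 1) * β + (α ^ 2 - α - 1) = 0 := by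
  have hα : (α : ℂ) ^ 3 = α ^ 2 + α + 1 := mod_cast h.real_root
  apply mul_left_cancel₀ (sub_ne_zero.2 (h.ne_ofReal α))
  linear_combination h.complex_root - hα

theorem two_mul_re (h : TribonacciPair α β) : 2 * β.re = 1 - α := by
  have him := congrArg Complex.im h.quadratic
  simp only [pow_two, Complex.add_im, Complex.mul_im, Complex.sub_im, Complex.sub_re,
    Complex.ofReal_re, Complex.ofReal_im, Complex.one_re, Complex.one_im,
    Complex.zero_im] at him
  apply mul_left_cancel₀ h.im_ne_zero
  linear_combination him

theorem conj_eq (h : TribonacciPair α β) : conj β = 1 - α - β := by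
  have hsum := Complex.add_conj β
  rw [h.two_mul_re] at hsum
  push_cast at hsum
  linear_combination hsum

theorem mul_normSq (h : TribonacciPair α β) : α * Complex.normSq β = 1 := by
  have hre := congrArg Complex.re h.quadratic
  simp only [pow_two, Complex.add_re, Complex.mul_re, Complex.sub_im, Complex.sub_re,
    Complex.ofReal_re, Complex.ofReal_im, Complex.one_re, Complex.one_im,
    Complex.zero_re] at hre
  rw [Complex.normSq_apply]
  linear_combination h.real_root - α * hre + α * β.re * h.two_mul_re

theorem minpoly_root (h : TribonacciPair α β) : minpoly ℚ α = X ^ 3 - X ^ 2 - X - 1 :=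
  (minpoly.eq_of_irreducible_of_monic irreducible_tribonacci (aeval_tribonacci h.real_root)
    (by monicity!)).symm

theorem isIntegral_root (h : TribonacciPair α β) : IsIntegral ℚ α :=
  (isIntegral_of_tribonacci h.real_root).tower_top

theorem finrank_adjoin_root (h : TribonacciPair α β) : Module.finrank ℚ ℚ⟮α⟯ = 3 := by
  rw [adjoin.finrank h.isIntegral_root, h.minpoly_root]
  compute_degree!

theorem exists_algHom_apply_eq (h : TribonacciPair α β) : ∃ σ : ℂ →ₐ[ℚ] ℂ, σ α = β := by
  apply exists_algHom_apply_eq_of_aeval_minpoly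
  · rw [mk_complex]
    exact aleph0_lt_continuum
  · exact (isIntegral_of_tribonacci (mod_cast h.real_root)).tower_top
  · rw [← Complex.coe_algebraMap, minpoly.algebraMap_eq (algebraMap ℝ ℂ).injective, h.minpoly_root]
    exact aeval_tribonacci h.complex_root

theorem mul_normSq_eq_norm (h : TribonacciPair α β) {σ : ℂ →ₐ[ℚ] ℂ} (hσ : σ α = β)
    (x : ℚ⟮α⟯) : x * Complex.normSq (σ (x : ℝ)) = Algebra.norm ℚ x := by
  let ι : ℚ⟮α⟯ →ₐ[ℚ] ℂ := (Complex.ofRealAm.restrictScalars ℚ).comp ℚ⟮α⟯.val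
  let c : ℂ →ₐ[ℚ] ℂ := Complex.conjAe.toAlgHom.restrictScalars ℚ
  let e : Fin 3 → ℚ⟮α⟯ →ₐ[ℚ] ℂ := ![ι, σ.comp ι, c.comp (σ.comp ι)]
  have he (y : ℚ⟮α⟯) (i : Fin 3) : e i y = ![(y : ℂ), σ y, conj (σ y)] i := by
    fin_cases i <;> rfl
  have : Module.Finite ℚ ℚ⟮α⟯ := Module.finite_of_finrank_pos (by simp [h.finrank_adjoin_root])
  have hinj : e.Injective := by
    intro i j hij
    have hgen := DFunLike.congr_fun hij (AdjoinSimple.gen ℚ α)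
    rw [he, he] at hgen
    simp only [AdjoinSimple.coe_gen, hσ] at hgen
    have hβ := h.ne_ofReal α
    have hβ' := h.conjugate.ne_ofReal α
    have hne := h.ne_conj
    fin_cases i <;> fin_cases j <;> simp_all
  have hbij : e.Bijective := by
    rw [Fintype.bijective_iff_injective_and_card, AlgHom.card, h.finrank_adjoin_root]
    exact ⟨hinj, rfl⟩
  have hnorm := Algebra.norm_eq_prod_embeddings ℚ ℂ x
  rw [← hbij.prod_comp (fun τ ↦ τ x), Fin.prod_univ_three] at hnorm
  simp only [he] at hnorm
  apply Complex.ofReal_injective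
  calc ((x * Complex.normSq (σ (x : ℝ)) : ℝ) : ℂ) = x * σ (x : ℝ) * conj (σ (x : ℝ)) := by
        rw [Complex.ofReal_mul, ← Complex.mul_conj, mul_assoc]
    _ = algebraMap ℚ ℂ (Algebra.norm ℚ x) := hnorm.symm
    _ = ((Algebra.norm ℚ x : ℝ) : ℂ) := by simp

theorem exists_int_eq_mul_normSq (h : TribonacciPair α β) {σ : ℂ →ₐ[ℚ] ℂ} (hσ : σ α = β)
    {x : ℝ} (hx : x ∈ ℚ⟮α⟯) (hint : IsIntegral ℤ x) :
    ∃ k : ℤ, x * Complex.normSq (σ x) = k := by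
  have hint' : IsIntegral ℤ (⟨x, hx⟩ : ℚ⟮α⟯) :=
    (isIntegral_algebraMap_iff (algebraMap ℚ⟮α⟯ ℝ).injective).1 hint
  obtain ⟨k, hk⟩ := IsIntegrallyClosed.isIntegral_iff.1 (Algebra.isIntegral_norm ℚ hint')
  exact ⟨k, by rw [h.mul_normSq_eq_norm hσ ⟨x, hx⟩, ← hk, eq_intCast, Rat.cast_intCast]⟩

theorem finrank_adjoin_complex_root (h : TribonacciPair α β) :
    Module.finrank ℚ⟮α⟯ ℚ⟮α⟯⟮β⟯ = 2 := by
  let a := AdjoinSimple.gen ℚ α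
  let P : ℚ⟮α⟯[X] := X ^ 2 + C (a - 1) * X + C (a ^ 2 - a - 1)
  have hP : P.Monic := by unfold P; monicity!
  have ha : algebraMap ℚ⟮α⟯ ℂ a = α := rfl
  have hroot : aeval β P = 0 := by simpa [P, ha] using h.quadratic
  have hint : IsIntegral ℚ⟮α⟯ β := ⟨P, hP, hroot⟩
  rw [adjoin.finrank hint]
  apply le_antisymm
  · calc (minpoly ℚ⟮α⟯ β).natDegree ≤ P.natDegree :=
          natDegree_le_of_dvd (minpoly.dvd _ _ hroot) hP.ne_zero
      _ ≤ 2 := by unfold P; compute_degree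
  · rw [minpoly.two_le_natDegree_iff hint]
    rintro ⟨y, hy⟩
    exact h.ne_ofReal y hy.symm

theorem exists_real_of_conj_eq (h : TribonacciPair α β) {x : ℂ} (hx : x ∈ ℚ⟮(α : ℂ), β⟯)
    (hconj : conj x = x) : ∃ y ∈ ℚ⟮α⟯, (y : ℂ) = x := by
  have hle : ℚ⟮(α : ℂ), β⟯ ≤ ℚ⟮α⟯⟮β⟯.restrictScalars ℚ := by
    rw [adjoin_le_iff, Set.insert_subset_iff, Set.singleton_subset_iff]
    exact ⟨_root_.algebraMap_mem ℚ⟮α⟯⟮β⟯ (AdjoinSimple.gen ℚ α), mem_adjoin_simple_self _ β⟩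
  let c : ℂ →ₐ[ℚ⟮α⟯] ℂ := Complex.conjAe.toAlgHom.restrictScalars ℚ⟮α⟯
  have hne : ℚ⟮α⟯⟮β⟯.val ≠ c.comp ℚ⟮α⟯⟮β⟯.val := fun e ↦
    h.ne_conj (DFunLike.congr_fun e (AdjoinSimple.gen ℚ⟮α⟯ β))
  obtain ⟨y, hy⟩ := mem_bot_of_algHom_apply_eq
    (by rw [h.finrank_adjoin_complex_root]; exact Nat.prime_two) hne (x := ⟨x, hle hx⟩) hconj.symm
  exact ⟨y, y.2, congrArg Subtype.val hy⟩

theorem exists_rat_of_conj_apply_eq (h : TribonacciPair α β) {σ : ℂ →ₐ[ℚ] ℂ} (hσ : σ α = β)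
    {x : ℝ} (hx : x ∈ ℚ⟮α⟯) (hconj : conj (σ x) = σ x) : ∃ q : ℚ, (q : ℝ) = x := by
  let τ : ℚ⟮α⟯ →ₐ[ℚ] ℂ := (σ.comp (Complex.ofRealAm.restrictScalars ℚ)).comp ℚ⟮α⟯.val
  let c : ℂ →ₐ[ℚ] ℂ := Complex.conjAe.toAlgHom.restrictScalars ℚ
  have hne : τ ≠ c.comp τ := fun e ↦ h.ne_conj <| by
    have hgen : σ α = conj (σ α) := DFunLike.congr_fun e (AdjoinSimple.gen ℚ α)
    rwa [hσ] at hgen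
  obtain ⟨q, hq⟩ := mem_bot_of_algHom_apply_eq
    (by rw [h.finrank_adjoin_root]; exact Nat.prime_three) hne (x := ⟨x, hx⟩) hconj.symm
  exact ⟨q, by simpa using congrArg Subtype.val hq⟩

theorem ofReal_mem : (α : ℂ) ∈ ℚ⟮(α : ℂ), β⟯ := subset_adjoin _ _ (by simp)

theorem complex_root_mem : β ∈ ℚ⟮(α : ℂ), β⟯ := subset_adjoin _ _ (by simp)

theorem conj_root_mem (h : TribonacciPair α β) : conj β ∈ ℚ⟮(α : ℂ), β⟯ := by
  rw [h.conj_eq]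
  exact sub_mem (sub_mem (one_mem _) ofReal_mem) complex_root_mem

theorem conj_mem (h : TribonacciPair α β) {x : ℂ} (hx : x ∈ ℚ⟮(α : ℂ), β⟯) :
    conj x ∈ ℚ⟮(α : ℂ), β⟯ := by
  let c : ℂ →ₐ[ℚ] ℂ := Complex.conjAe.toAlgHom.restrictScalars ℚ
  have hα : c α ∈ ℚ⟮(α : ℂ), β⟯ := (Complex.conj_ofReal α).symm ▸ ofReal_mem
  have hle : ℚ⟮(α : ℂ), β⟯ ≤ ℚ⟮(α : ℂ), β⟯.comap c := by
    rw [adjoin_le_iff, Set.insert_subset_iff, Set.singleton_subset_iff]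
    exact ⟨hα, h.conj_root_mem⟩
  exact hle hx

theorem normSq_mem (h : TribonacciPair α β) {x : ℂ} (hx : x ∈ ℚ⟮(α : ℂ), β⟯) :
    Complex.normSq x ∈ ℚ⟮α⟯ := by
  obtain ⟨y, hy, hyx⟩ := h.exists_real_of_conj_eq (mul_mem hx (h.conj_mem hx)) (by simp [mul_comm])
  rw [Complex.mul_conj] at hyx
  rwa [← Complex.ofReal_injective hyx]

theorem one_le_mul_normSq (h : TribonacciPair α β) {σ : ℂ →ₐ[ℚ] ℂ} (hσ : σ α = β)
    {x : ℝ} (hx : x ∈ ℚ⟮α⟯) (hint : IsIntegral ℤ x) (hx0 : 0 < x) :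
    1 ≤ x * Complex.normSq (σ x) := by
  obtain ⟨k, hk⟩ := h.exists_int_eq_mul_normSq hσ hx hint
  have hσx : σ x ≠ 0 := (map_ne_zero σ).2 (mod_cast hx0.ne')
  have hpos : 0 < x * Complex.normSq (σ x) := mul_pos hx0 (Complex.normSq_pos.2 hσx)
  rw [hk] at hpos ⊢
  exact_mod_cast Int.add_one_le_of_lt (mod_cast hpos : (0 : ℤ) < k)

theorem pow_three_eq_of_pow_eq_root (h : TribonacciPair α β) {v : ℝ} (hvmem : v ∈ ℚ⟮α⟯)
    (hv : 1 < v) (hv2 : v ^ 2 < 1.84) {m : ℕ} (hm : m ≠ 0) (hvm : v ^ m = α) : v ^ 3 = v + 1 := by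
  obtain ⟨σ, hσ⟩ := h.exists_algHom_apply_eq
  have hnorm : v * Complex.normSq (σ v) = 1 := by
    rw [← pow_eq_one_iff_of_nonneg (mul_nonneg (by positivity) (Complex.normSq_nonneg _)) hm,
      mul_pow, ← map_pow, ← map_pow, ← Complex.ofReal_pow, hvm, hσ, h.mul_normSq]
  have hint : IsIntegral ℤ v :=
    .of_pow (Nat.pos_of_ne_zero hm) (hvm ▸ isIntegral_of_tribonacci h.real_root)
  have hsub : v - 1 ∈ ℚ⟮α⟯ := sub_mem hvmem (one_mem _)
  have hadd : v + 1 ∈ ℚ⟮α⟯ := add_mem hvmem (one_mem _)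
  obtain ⟨p, hp⟩ := h.exists_int_eq_mul_normSq hσ hsub (hint.sub isIntegral_one)
  obtain ⟨q, hq⟩ := h.exists_int_eq_mul_normSq hσ hadd (hint.add isIntegral_one)
  have hp1 : 1 ≤ (p : ℝ) :=
    hp ▸ h.one_le_mul_normSq hσ hsub (hint.sub isIntegral_one) (by linarith)
  have hq1 : 1 ≤ (q : ℝ) :=
    hq ▸ h.one_le_mul_normSq hσ hadd (hint.add isIntegral_one) (by linarith)
  -- As `v` has norm `1`, the positive integers `p` and `q`, the norms of `v - 1` and `v + 1`,
  -- determine its minimal polynomial. Their sum is less than `3`, so both are `1`.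
  simp only [Complex.ofReal_sub, Complex.ofReal_add, Complex.ofReal_one, map_sub, map_add, map_one,
    Complex.normSq_sub, Complex.normSq_add, mul_one] at hp hq
  set N := Complex.normSq (σ v)
  set r := (σ v).re
  have hsum : (p + q : ℝ) = 2 + 2 * v + 4 * r := by linear_combination 2 * hnorm - hp - hq
  have hlt : (p + q : ℝ) < 3 := by
    by_contra! hge
    have hle : 1 ≤ (v - 1) * (N + 1 / 2 + v) := by nlinarith
    have hle' : v ≤ (v - 1) * (1 + v / 2 + v ^ 2) := by nlinarith
    nlinarith [sq_nonneg (v - 1.34)]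
  obtain ⟨rfl, rfl⟩ : p = 1 ∧ q = 1 := by
    norm_cast at hlt hp1 hq1
    lia
  push_cast at hp hq
  linear_combination v * hp - (v - 1) * hnorm + (v - 1) * v * ((hp + hq) / 2 - hnorm)

theorem eq_one_of_pow_eq_root (h : TribonacciPair α β) {v : ℝ} (hvmem : v ∈ ℚ⟮α⟯) (hv : 0 < v)
    {m : ℕ} (hvm : v ^ m = α) : m = 1 := by
  have hα := h.lt_root
  have hα' := h.root_lt
  have hm : m ≠ 0 := by
    rintro rfl
    rw [pow_zero] at hvm
    linarith
  have hv1 : 1 < v := by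
    rw [← one_lt_pow_iff_of_nonneg hv.le hm, hvm]
    exact h.one_lt
  by_contra hm1
  have hle {k : ℕ} (hk : k ≤ m) : v ^ k ≤ α := hvm ▸ pow_le_pow_right₀ hv1.le hk
  have hcube := h.pow_three_eq_of_pow_eq_root hvmem hv1 ((hle (by lia)).trans_lt hα') hm hvm
  obtain rfl | hm3 : m = 2 ∨ 3 ≤ m := by lia
  · nlinarith
  · linarith [hle hm3]

theorem exists_zpow_eq_of_pow_eq_zpow (h : TribonacciPair α β) {u : ℝ} (humem : u ∈ ℚ⟮α⟯)
    (hu : 0 < u) {B : ℕ} (hB : B ≠ 0) {E : ℤ} (hE : u ^ B = α ^ E) : ∃ t : ℤ, u = α ^ t := by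
  obtain ⟨t, ht⟩ := eq_zpow_of_pow_eq_zpow (a := AdjoinSimple.gen ℚ α) (u := ⟨u, humem⟩) h.pos
    (fun v hv m hvm ↦ h.eq_one_of_pow_eq_root v.2 hv (congrArg Subtype.val hvm)) hu hB
    (E := E) (Subtype.ext hE)
  exact ⟨t, congrArg Subtype.val ht⟩

theorem sub_conj_sq (h : TribonacciPair α β) :
    (β - conj β) ^ 2 = -(3 * α ^ 2 - 2 * α - 5) := by
  rw [h.conj_eq]
  linear_combination 4 * h.quadratic

-- `-44` is the discriminant of `X ^ 3 - X ^ 2 - X - 1`.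
theorem exists_sq_eq_neg_44 (h : TribonacciPair α β) :
    ∃ δ ∈ ℚ⟮(α : ℂ), β⟯, conj δ = -δ ∧ δ ^ 2 = -44 := by
  refine ⟨(α - β) * (α - conj β) * (β - conj β), ?_, ?_, ?_⟩
  · exact mul_mem (mul_mem (sub_mem ofReal_mem complex_root_mem)
      (sub_mem ofReal_mem h.conj_root_mem)) (sub_mem complex_root_mem h.conj_root_mem)
  · simp only [map_mul, map_sub, Complex.conj_conj, Complex.conj_ofReal]
    ring
  · have hα : (α : ℂ) ^ 3 = α ^ 2 + α + 1 := mod_cast h.real_root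
    have hnorm : (α - β) * (α - conj β) = 3 * α ^ 2 - 2 * α - 1 := by
      rw [h.conj_eq]
      linear_combination -h.quadratic
    rw [hnorm, mul_pow, h.sub_conj_sq]
    linear_combination (-27 * (α : ℂ) ^ 3 + 27 * α ^ 2 + 27 * α - 49) * hα

theorem exists_int_eq_two_mul_re_of_pow_eq_one (h : TribonacciPair α β) {ζ : ℂ}
    (hζmem : ζ ∈ ℚ⟮(α : ℂ), β⟯) {N : ℕ} (hN : N ≠ 0) (hζ : ζ ^ N = 1) :
    ∃ k : ℤ, 2 * ζ.re = k := by
  have add_inv {ξ : ℂ} (hξ : ξ ^ N = 1) : ξ + ξ⁻¹ = (2 * ξ.re : ℝ) := by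
    rw [Complex.inv_eq_conj (Complex.norm_eq_one_of_pow_eq_one hξ hN), Complex.add_conj]
  obtain ⟨σ, hσ⟩ := h.exists_algHom_apply_eq
  have hσζ : σ ζ ^ N = 1 := by rw [← map_pow, hζ, map_one]
  -- `ζ + ζ⁻¹` is a real element of `ℚ(α)` with real conjugates, hence rational.
  obtain ⟨y, hy, hyζ⟩ := h.exists_real_of_conj_eq (add_mem hζmem (inv_mem hζmem))
    (by rw [add_inv hζ, Complex.conj_ofReal])
  obtain ⟨q, rfl⟩ := h.exists_rat_of_conj_apply_eq hσ hy
    (by rw [hyζ, map_add, map_inv₀, add_inv hσζ, Complex.conj_ofReal])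
  have hint : IsIntegral ℤ (algebraMap ℚ ℂ q) := by
    have hζint : IsIntegral ℤ ζ := .of_pow (Nat.pos_of_ne_zero hN) (hζ ▸ isIntegral_one)
    have hζint' : IsIntegral ℤ ζ⁻¹ :=
      .of_pow (Nat.pos_of_ne_zero hN) (by rw [inv_pow, hζ, inv_one]; exact isIntegral_one)
    have hq : algebraMap ℚ ℂ q = ζ + ζ⁻¹ := by
      rw [← hyζ]
      simp
    exact hq ▸ hζint.add hζint'
  obtain ⟨k, hk⟩ := IsIntegrallyClosed.isIntegral_iff.1
    ((isIntegral_algebraMap_iff (algebraMap ℚ ℂ).injective).1 hint)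
  refine ⟨k, Complex.ofReal_injective ?_⟩
  rw [← add_inv hζ, ← hyζ, ← hk]
  simp

theorem isSquare_of_two_mul_re_eq (h : TribonacciPair α β) {ζ : ℂ} (hζmem : ζ ∈ ℚ⟮(α : ℂ), β⟯)
    (hnorm : Complex.normSq ζ = 1) {q : ℚ} (hq : 2 * ζ.re = q) : IsSquare (44 * (4 - q ^ 2)) := by
  obtain ⟨δ, hδmem, hδconj, hδ⟩ := h.exists_sq_eq_neg_44
  -- Both `δ` and `ζ - conj ζ` are purely imaginary, so their product is real and lies in `ℚ(α)`.
  obtain ⟨y, hy, hyδ⟩ := h.exists_real_of_conj_eq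
    (mul_mem hδmem (sub_mem hζmem (h.conj_mem hζmem)))
    (by rw [map_mul, map_sub, Complex.conj_conj, hδconj]; ring)
  have hysq : y ^ 2 = 44 * (4 - q ^ 2) := by
    apply Complex.ofReal_injective
    rw [Complex.normSq_apply] at hnorm
    have hnormC : (ζ.re : ℂ) * ζ.re + ζ.im * ζ.im = 1 := mod_cast hnorm
    rw [Complex.ofReal_pow, hyδ, mul_pow, hδ, Complex.sub_conj, mul_pow, Complex.I_sq, ← hq]
    push_cast
    linear_combination 176 * hnormC
  refine isSquare_of_isSquare_algebraMap (L := ℚ⟮α⟯) (by rw [h.finrank_adjoin_root]; decide)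
    ⟨⟨y, hy⟩, Subtype.ext ?_⟩
  push_cast [← sq]
  exact hysq.symm

theorem eq_one_or_neg_one_of_pow_eq_one (h : TribonacciPair α β) {ζ : ℂ}
    (hζmem : ζ ∈ ℚ⟮(α : ℂ), β⟯) {N : ℕ} (hN : N ≠ 0) (hζ : ζ ^ N = 1) : ζ = 1 ∨ ζ = -1 := by
  obtain ⟨k, hk⟩ := h.exists_int_eq_two_mul_re_of_pow_eq_one hζmem hN hζ
  have hnorm : Complex.normSq ζ = 1 := by
    rw [← Complex.sq_norm, Complex.norm_eq_one_of_pow_eq_one hζ hN, one_pow]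
  have hsq : IsSquare (44 * (4 - k ^ 2) : ℚ) :=
    h.isSquare_of_two_mul_re_eq hζmem hnorm (by rw [hk, Rat.cast_intCast])
  rw [Complex.normSq_apply] at hnorm
  obtain ⟨hk2, hk2'⟩ : -2 ≤ k ∧ k ≤ 2 := by
    refine abs_le.1 (sq_le_sq₀ (abs_nonneg k) zero_le_two |>.1 ?_)
    rw [sq_abs]
    have hle : (k ^ 2 : ℝ) ≤ 2 ^ 2 := by rw [← hk]; nlinarith
    exact_mod_cast hle
  interval_cases k
  · right
    have hre : ζ.re = -1 := by push_cast at hk; linarith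
    exact Complex.ext hre (by simpa [hre] using hnorm)
  · norm_num at hsq
  · norm_num at hsq
  · norm_num at hsq
  · left
    have hre : ζ.re = 1 := by push_cast at hk; linarith
    exact Complex.ext hre (by simpa [hre] using hnorm)

theorem normSq_div (h : TribonacciPair α β) : Complex.normSq (α / β) = α ^ 3 := by
  have hβ : Complex.normSq β = α⁻¹ := eq_inv_of_mul_eq_one_right h.mul_normSq
  rw [map_div₀, hβ, Complex.normSq_ofReal]
  field_simp

theorem eq_zero_of_div_zpow_eq_one (h : TribonacciPair α β) {A : ℤ}
    (hA : (α / β : ℂ) ^ A = 1) : A = 0 := by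
  have hnorm := congrArg Complex.normSq hA
  rw [map_zpow₀, h.normSq_div, map_one] at hnorm
  exact (zpow_eq_one_iff_right₀ (pow_pos h.pos 3).le (one_lt_pow₀ h.one_lt three_ne_zero).ne').1
    hnorm

theorem eq_zpow_or_eq_neg_zpow_of_pow_eq_zpow (h : TribonacciPair α β) {z w : ℂ}
    (hzmem : z ∈ ℚ⟮(α : ℂ), β⟯) (hz : z ^ 3 = α / β) (hwmem : w ∈ ℚ⟮(α : ℂ), β⟯) {A : ℤ} {B : ℕ}
    (hB : B ≠ 0) (hAB : w ^ B = (α / β) ^ A) :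
    ∃ t : ℤ, Complex.normSq w = α ^ t ∧ (w = z ^ t ∨ w = -z ^ t) := by
  have hdiv0 : (α / β : ℂ) ≠ 0 := div_ne_zero (mod_cast h.pos.ne') h.ne_zero
  have hz0 : z ≠ 0 := by
    rintro rfl
    exact hdiv0 (by rw [← hz, zero_pow three_ne_zero])
  have hw0 : w ≠ 0 := by
    rintro rfl
    rw [zero_pow hB] at hAB
    exact zpow_ne_zero A hdiv0 hAB.symm
  have hnorm : Complex.normSq w ^ B = α ^ (3 * A) := by
    rw [← map_pow, hAB, map_zpow₀, h.normSq_div, zpow_mul, zpow_ofNat]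
  obtain ⟨t, ht⟩ :=
    h.exists_zpow_eq_of_pow_eq_zpow (h.normSq_mem hwmem) (Complex.normSq_pos.2 hw0) hB hnorm
  have hexp : t * B = 3 * A := by
    rw [ht, ← zpow_natCast, ← zpow_mul] at hnorm
    exact zpow_right_injective₀ h.pos h.one_lt.ne' hnorm
  have hroot : (w / z ^ t) ^ B = 1 := by
    have hzt : (z ^ t) ^ B ≠ 0 := pow_ne_zero _ (zpow_ne_zero _ hz0)
    rw [div_pow, div_eq_one_iff_eq hzt, hAB, ← hz, ← zpow_natCast (z ^ t), ← zpow_mul, hexp,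
      zpow_mul, zpow_ofNat]
  refine ⟨t, ht, ?_⟩
  refine (h.eq_one_or_neg_one_of_pow_eq_one (div_mem hwmem (zpow_mem hzmem t)) hB hroot).imp
    (fun e ↦ ?_) fun e ↦ ?_
  · rwa [div_eq_one_iff_eq (zpow_ne_zero _ hz0)] at e
  · rwa [div_eq_iff (zpow_ne_zero _ hz0), neg_one_mul] at e

theorem map_complex_root (h : TribonacciPair α β) {σ : ℂ →ₐ[ℚ] ℂ} (hσ : σ α = β) :
    σ β = α ∨ σ β = conj β := by
  have hquad := congrArg σ h.quadratic
  simp only [map_add, map_sub, map_mul, map_pow, map_one, map_zero, hσ] at hquad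
  have hfactor : (σ β - α) * (σ β - conj β) = 0 := by
    rw [h.conj_eq]
    linear_combination hquad - h.quadratic
  simpa only [mul_eq_zero, sub_eq_zero] using hfactor

theorem map_symmDet_conj (h : TribonacciPair α β) {σ : ℂ →ₐ[ℚ] ℂ} (hσ : σ α = β) (k l : ℤ) :
    σ (symmDet β (conj β) k l) = symmDet (α : ℂ) (conj β) k l := by
  have hconj : σ (conj β) = 1 - β - σ β := by
    rw [h.conj_eq, map_sub, map_sub, map_one, hσ]
  rw [map_symmDet, hconj]
  rcases h.map_complex_root hσ with hβ | hβ
  · rw [hβ, h.conj_eq, sub_right_comm]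
  · rw [hβ, symmDet_comm, h.conj_eq]
    congr 1
    ring

theorem one_le_normSq_symmDet_mul (h : TribonacciPair α β) {k l : ℤ}
    (hne : symmDet β (conj β) k l ≠ 0) :
    1 ≤ Complex.normSq (symmDet β (conj β) k l) *
      Complex.normSq (symmDet (α : ℂ) (conj β) k l) ^ 2 := by
  obtain ⟨σ, hσ⟩ := h.exists_algHom_apply_eq
  obtain ⟨g, hg, hgβ⟩ := h.exists_real_of_conj_eq
    (symmDet_mem _ complex_root_mem h.conj_root_mem k l)
    (by rw [map_symmDet, Complex.conj_conj, symmDet_comm])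
  have hint : IsIntegral ℤ g := by
    rw [← isIntegral_algebraMap_iff (algebraMap ℝ ℂ).injective, Complex.coe_algebraMap, hgβ]
    exact isIntegral_symmDet h.complex_root h.conjugate.complex_root k l
  have hg0 : g ≠ 0 := by
    rintro rfl
    exact hne (hgβ ▸ Complex.ofReal_zero)
  have hnorm := h.one_le_mul_normSq hσ (pow_mem hg 2) (hint.pow 2) (by positivity)
  rwa [Complex.ofReal_pow, map_pow, map_pow, hgβ, h.map_symmDet_conj hσ, sq g,
    ← Complex.normSq_ofReal, hgβ] at hnorm

theorem normSq_one_sub_root_zpow_le (h : TribonacciPair α β) {k : ℤ} (hk : k ≤ 0) :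
    Complex.normSq (1 - (α : ℂ) ^ k) ≤ 1 := by
  have hpos : 0 < α ^ k := zpow_pos h.pos k
  have hle : α ^ k ≤ 1 := zpow_le_one_of_nonpos₀ h.one_lt.le hk
  rw [← Complex.ofReal_zpow, ← Complex.ofReal_one, ← Complex.ofReal_sub, Complex.normSq_ofReal]
  exact mul_le_one₀ (by linarith) (by linarith) (by linarith)

theorem normSq_one_sub_complex_root_zpow_le (h : TribonacciPair α β) {k n : ℤ} (hk : k ≤ 0)
    (hkn : -n ≤ k) : Complex.normSq (1 - β ^ k) ≤ 4 * α ^ n := by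
  have hpow : Complex.normSq (β ^ k) = α ^ (-k) := by
    rw [map_zpow₀, eq_inv_of_mul_eq_one_right h.mul_normSq, inv_zpow']
  have hle : α ^ (-k) ≤ α ^ n := zpow_le_zpow_right₀ h.one_lt.le (by lia)
  have hone : 1 ≤ α ^ n := one_le_zpow₀ h.one_lt.le (by lia)
  have hsub := normSq_sub_le_two_mul 1 (β ^ k)
  rw [map_one, hpow] at hsub
  linarith

theorem normSq_sub_ofReal (h : TribonacciPair α β) (x : ℝ) :
    Complex.normSq (β - x) = x ^ 2 + (α - 1) * x + (α ^ 2 - α - 1) := by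
  apply Complex.ofReal_injective
  rw [← Complex.mul_conj, map_sub, Complex.conj_ofReal, h.conj_eq]
  push_cast
  linear_combination -h.quadratic

theorem normSq_conj_sub_root (h : TribonacciPair α β) :
    Complex.normSq (conj β - α) = 3 * α ^ 2 - 2 * α - 1 := by
  rw [h.conjugate.normSq_sub_ofReal]
  ring

theorem lt_root_pow_eight (h : TribonacciPair α β) : 100 < α ^ 8 :=
  calc (100 : ℝ) < 1.83 ^ 8 := by norm_num
    _ ≤ α ^ 8 := by gcongr; exact h.lt_root.le

theorem normSq_conj_sub (h : TribonacciPair α β) :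
    Complex.normSq (conj β - β) = 3 * α ^ 2 - 2 * α - 5 := by
  apply Complex.ofReal_injective
  rw [← Complex.mul_conj, map_sub, Complex.conj_conj]
  push_cast
  linear_combination -h.sub_conj_sq

theorem normSq_symmDet_root_le (h : TribonacciPair α β) {k l n : ℤ} (hk : k ≤ 0) (hl : l ≤ 0)
    (hkn : -n ≤ k) (hln : -n ≤ l) :
    Complex.normSq (symmDet (α : ℂ) (conj β) k l) ≤ α ^ (n + 8) := by
  have hα := h.lt_root
  have hα' := h.root_lt
  have hpow : 100 < α ^ (8 : ℤ) := h.lt_root_pow_eight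
  calc Complex.normSq (symmDet (α : ℂ) (conj β) k l)
      ≤ (3 * α ^ 2 - 2 * α - 1) * (2 * (1 * (4 * α ^ n) + 1 * (4 * α ^ n))) :=
        normSq_symmDet_le h.normSq_conj_sub_root.le (h.normSq_one_sub_root_zpow_le hk)
          (h.normSq_one_sub_root_zpow_le hl)
          (h.conjugate.normSq_one_sub_complex_root_zpow_le hk hkn)
          (h.conjugate.normSq_one_sub_complex_root_zpow_le hl hln)
    _ = α ^ n * (16 * (3 * α ^ 2 - 2 * α - 1)) := by ring
    _ ≤ α ^ n * α ^ (8 : ℤ) := mul_le_mul_of_nonneg_left (by nlinarith) (zpow_pos h.pos n).le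
    _ = α ^ (n + 8) := (zpow_add₀ h.pos.ne' n 8).symm

theorem normSq_symmDet_complex_root_le (h : TribonacciPair α β) {k l n : ℤ} (hk : k ≤ 0)
    (hl : l ≤ 0) (hkn : -n ≤ k) (hln : -n ≤ l) :
    Complex.normSq (symmDet β (conj β) k l) ≤ α ^ (2 * n + 8) := by
  have hα := h.lt_root
  have hα' := h.root_lt
  have hpow : 100 < α ^ (8 : ℤ) := h.lt_root_pow_eight
  calc Complex.normSq (symmDet β (conj β) k l)
      ≤ (3 * α ^ 2 - 2 * α - 5) *
          (2 * (4 * α ^ n * (4 * α ^ n) + 4 * α ^ n * (4 * α ^ n))) :=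
        normSq_symmDet_le h.normSq_conj_sub.le
          (h.normSq_one_sub_complex_root_zpow_le hk hkn)
          (h.normSq_one_sub_complex_root_zpow_le hl hln)
          (h.conjugate.normSq_one_sub_complex_root_zpow_le hk hkn)
          (h.conjugate.normSq_one_sub_complex_root_zpow_le hl hln)
    _ = (α ^ n) ^ 2 * (64 * (3 * α ^ 2 - 2 * α - 5)) := by ring
    _ ≤ (α ^ n) ^ 2 * α ^ (8 : ℤ) := mul_le_mul_of_nonneg_left (by nlinarith) (sq_nonneg _)
    _ = α ^ (2 * n + 8) := by rw [zpow_add₀ h.pos.ne', two_mul, zpow_add₀ h.pos.ne', sq]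

theorem normSq_coeff (h : TribonacciPair α β) :
    Complex.normSq ((α - 1) / (4 * α - 6) / ((β - 1) / (4 * β - 6)) *
      ((conj β - β) / (conj β - α))) = (9 * α ^ 2 - 2 * α + 4) / 11 := by
  have hα := h.lt_root
  have hβ_sub_one : Complex.normSq (β - 1) = α ^ 2 - 1 := by
    rw [← Complex.ofReal_one, h.normSq_sub_ofReal]
    ring
  have hβ_sub_six : Complex.normSq (4 * β - 6) = 16 * α ^ 2 + 8 * α - 4 := by
    have hβ := h.normSq_sub_ofReal (3 / 2)
    have h4 : (4 * β - 6 : ℂ) = (4 : ℝ) * (β - (3 / 2 : ℝ)) := by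
      push_cast
      ring
    rw [h4, map_mul, Complex.normSq_ofReal, hβ]
    ring
  have hα_sub_one : Complex.normSq (α - 1) = (α - 1) ^ 2 := by
    rw [← Complex.ofReal_one, ← Complex.ofReal_sub, Complex.normSq_ofReal, sq]
  have hα_sub_six : Complex.normSq (4 * α - 6) = (4 * α - 6) ^ 2 := by
    rw [sq, ← Complex.normSq_ofReal]
    push_cast
    rfl
  have hden : (4 * α - 6) ^ 2 * (α ^ 2 - 1) * (3 * α ^ 2 - 2 * α - 1) ≠ 0 := by
    have h₁ : 0 < 4 * α - 6 := by linarith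
    have h₂ : 0 < α ^ 2 - 1 := by nlinarith
    have h₃ : 0 < 3 * α ^ 2 - 2 * α - 1 := by nlinarith
    positivity
  simp only [map_mul, map_div₀, hβ_sub_one, hβ_sub_six, hα_sub_one, hα_sub_six,
    h.normSq_conj_sub_root, h.normSq_conj_sub]
  rw [div_div_div_eq, div_mul_div_comm, div_eq_div_iff hden (by norm_num)]
  linear_combination (-76 + 892 * α - 1172 * α ^ 2 - 460 * α ^ 3 + 1248 * α ^ 4 - 432 * α ^ 5) *
    h.real_root

theorem lam2_mem (h : TribonacciPair α β) (n n₁ n₂ : ℕ) :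
    lam2 α β (conj β) n n₁ n₂ ∈ ℚ⟮(α : ℂ), β⟯ := by
  set K := ℚ⟮(α : ℂ), β⟯
  have hα : (α : ℂ) ∈ K := ofReal_mem
  have hβ : β ∈ K := complex_root_mem
  have hγ : conj β ∈ K := h.conj_root_mem
  have coeff_mem {w : ℂ} (hw : w ∈ K) : (w - 1) / (4 * w - 6) ∈ K :=
    div_mem (sub_mem hw (one_mem K)) (sub_mem (mul_mem (ofNat_mem K 4) hw) (ofNat_mem K 6))
  rw [lam2_eq (h.conjugate.ne_ofReal α) h.ne_conj.symm]
  exact mul_mem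
    (mul_mem (div_mem (coeff_mem hα) (coeff_mem hβ)) (div_mem (sub_mem hγ hβ) (sub_mem hγ hα)))
    (div_mem (symmDet_mem K hα hγ _ _) (symmDet_mem K hβ hγ _ _))

theorem normSq_lam2 (h : TribonacciPair α β) (n n₁ n₂ : ℕ) :
    Complex.normSq (lam2 α β (conj β) n n₁ n₂) = (9 * α ^ 2 - 2 * α + 4) / 11 *
      (Complex.normSq (symmDet (α : ℂ) (conj β) (n₁ - n) (n₂ - n)) /
        Complex.normSq (symmDet β (conj β) (n₁ - n) (n₂ - n))) := by
  rw [lam2_eq (h.conjugate.ne_ofReal α) h.ne_conj.symm, map_mul, h.normSq_coeff, map_div₀]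

theorem abs_le_of_normSq_lam2_eq_zpow (h : TribonacciPair α β) {n n₁ n₂ : ℕ} (h₁ : n₁ ≤ n)
    (h₂ : n₂ ≤ n) (hne : symmDet β (conj β) (n₁ - n) (n₂ - n) ≠ 0) {t : ℤ}
    (ht : Complex.normSq (lam2 α β (conj β) n n₁ n₂) = α ^ t) : |t| ≤ 3 * n + 26 := by
  have hα := h.one_lt
  have hnorm := h.one_le_normSq_symmDet_mul hne
  have hu : 0 < Complex.normSq (symmDet (α : ℂ) (conj β) (n₁ - n) (n₂ - n)) := by
    refine (Complex.normSq_nonneg _).lt_of_ne' fun hu ↦ ?_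
    rw [hu] at hnorm
    norm_num at hnorm
  have hv := Complex.normSq_pos.2 hne
  rw [h.normSq_lam2] at ht
  have hle := le_of_mul_div_eq_zpow hα hv hnorm (by nlinarith) hu
    (h.normSq_symmDet_root_le (n := n) (by lia) (by lia) (by lia) (by lia)) ht
  have hge := neg_le_of_mul_div_eq_zpow hα hv hnorm (by nlinarith [h.lt_root]) hu
    (h.normSq_symmDet_complex_root_le (n := n) (by lia) (by lia) (by lia) (by lia)) ht
  exact abs_le.2 ⟨by lia, by lia⟩

end TribonacciPair

theorem exists_pow_eq_zpow_of_zpow_eq_zpow {K : Type*} [DivisionMonoid K] {q w : K}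
    (hq : ∀ A : ℤ, q ^ A = 1 → A = 0) (h : ∃ A B : ℤ, (A ≠ 0 ∨ B ≠ 0) ∧ q ^ A = w ^ B) :
    ∃ A : ℤ, ∃ B : ℕ, B ≠ 0 ∧ w ^ B = q ^ A := by
  obtain ⟨A, B, hne, hAB⟩ := h
  have hB : B ≠ 0 := by
    rintro rfl
    exact hne.elim (fun hA ↦ hA (hq A (by rw [hAB, zpow_zero]))) (fun h0 ↦ h0 rfl)
  obtain ⟨m, rfl | rfl⟩ := B.eq_nat_or_neg
  · exact ⟨A, m, mod_cast hB, by rw [hAB, zpow_natCast]⟩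
  · exact ⟨-A, m, by simpa using hB, by rw [zpow_neg, hAB, zpow_neg, inv_inv, zpow_natCast]⟩

theorem mult_dep_implies_power_of_z_general (α β γ z : ℂ)
    (hαim : α.im = 0) (hα : α ^ 3 = α ^ 2 + α + 1)
    (hβ : β ^ 3 = β ^ 2 + β + 1) (hβim : β.im ≠ 0) (hγ : γ = conj β)
    (hzmem : z ∈ IntermediateField.adjoin ℚ ({α, β} : Set ℂ)) (hz : z ^ 3 = α / β)
    (n n₁ n₂ : ℕ) (h₁ : n₁ ≤ n) (h₂ : n₂ ≤ n)
    (hden : (1 - β ^ ((n₁ : ℤ) - (n : ℤ))) * (1 - γ ^ ((n₂ : ℤ) - (n : ℤ))) -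
        (1 - β ^ ((n₂ : ℤ) - (n : ℤ))) * (1 - γ ^ ((n₁ : ℤ) - (n : ℤ))) ≠ 0)
    (hdep : ∃ A B : ℤ, (A ≠ 0 ∨ B ≠ 0) ∧ (α / β) ^ A = lam2 α β γ n n₁ n₂ ^ B) :
    ∃ t : ℤ, |t| ≤ 3 * (n : ℤ) + 26 ∧
      (lam2 α β γ n n₁ n₂ = z ^ t ∨ lam2 α β γ n n₁ n₂ = -z ^ t) := by
  obtain rfl := hγ
  lift α to ℝ using hαim
  have h : TribonacciPair α β := ⟨mod_cast hα, hβ, hβim⟩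
  obtain ⟨A, B, hB, hAB⟩ := exists_pow_eq_zpow_of_zpow_eq_zpow
    (fun A hA ↦ h.eq_zero_of_div_zpow_eq_one hA) hdep
  obtain ⟨t, ht, hpow⟩ :=
    h.eq_zpow_or_eq_neg_zpow_of_pow_eq_zpow hzmem hz (h.lam2_mem n n₁ n₂) hB hAB
  have hne : symmDet β (conj β) (n₁ - n) (n₂ - n) ≠ 0 :=
    mul_ne_zero (sub_ne_zero.2 h.ne_conj.symm) hden
  exact ⟨t, h.abs_le_of_normSq_lam2_eq_zpow h₁ h₂ hne ht, hpow⟩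

theorem mult_dep_implies_power_of_z (α β γ z : ℂ)
    (hαim : α.im = 0) (hα : α ^ 3 = α ^ 2 + α + 1)
    (hα1 : 1.83 < α.re) (hα2 : α.re < 1.84)
    (hβ : β ^ 3 = β ^ 2 + β + 1) (hβim : β.im ≠ 0)
    (hγ : γ = (starRingEnd ℂ) β)
    (hzmem : z ∈ IntermediateField.adjoin ℚ ({α, β} : Set ℂ))
    (hz : z ^ 3 = α / β)
    (n n₁ n₂ : ℕ) (h1 : n₁ < n) (h2 : n₂ < n₁)
    (hden : (1 - β ^ ((n₁ : ℤ) - (n : ℤ))) * (1 - γ ^ ((n₂ : ℤ) - (n : ℤ))) -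
        (1 - β ^ ((n₂ : ℤ) - (n : ℤ))) * (1 - γ ^ ((n₁ : ℤ) - (n : ℤ))) ≠ 0)
    (hdep : ∃ A B : ℤ, (A ≠ 0 ∨ B ≠ 0) ∧ (α / β) ^ A = lam2 α β γ n n₁ n₂ ^ B) :
    ∃ t : ℤ, |t| < 80 * (n : ℤ) + 244 ∧
      (lam2 α β γ n n₁ n₂ = z ^ t ∨ lam2 α β γ n n₁ n₂ = -z ^ t) := by
  obtain ⟨t, ht, hpow⟩ := mult_dep_implies_power_of_z_general α β γ z hαim hα hβ hβim hγ hzmem hz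
    n n₁ n₂ (by lia) (by lia) hden hdep
  exact ⟨t, by lia, hpow⟩
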